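/- Let (Ω, F, P) be a probability space with filtration (F_t)_{t≥0}, β ∈ (0,1), and let F: ℝ²_{>0} → ℝ_{>0} be a twice continuously differentiable neoclassical production function with F_{HX} > 0 satisfying liminf_{H→∞} σ_F(H,1) > σ for some σ > 1. Let (A_{Ht})_{t≥0} and (A_{Xt})_{t≥0} be adapted positive processes with E[ Σ_{t=1}^∞ (A_{Ht}/A_{Xt})^{1/σ−1} | F_0 ] < ∞ almost surely. Define w_t = F_H(A_{Ht},A_{Xt}) A_{Ht}, r_t = F_X(A_{Ht},A_{Xt}) A_{Xt}, P_t = β w_t, m_{t→t+s} = Π_{j=0}^{s−1} β w_{t+j}/(β w_{t+j+1} + r_{t+j+1}), and V_t = E[ Σ_{s=1}^∞ m_{t→t+s} r_{t+s} | F_t ]. Then V_t/P_t → 0 almost surely as t → ∞. -/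

import Mathlib

open MeasureTheory Filter Topology

noncomputable section

/-- Partial derivative of `F` with respect to its first argument (labor `H`). -/
def dH (F : ℝ → ℝ → ℝ) (H X : ℝ) : ℝ := deriv (fun h => F h X) H

/-- Partial derivative of `F` with respect to its second argument (land `X`). -/
def dX (F : ℝ → ℝ → ℝ) (H X : ℝ) : ℝ := deriv (fun x => F H x) X

/-- Second-order cross partial derivative of `F`. -/
def dHX (F : ℝ → ℝ → ℝ) (H X : ℝ) : ℝ := deriv (fun x => dH F H x) X

/-- Elasticity of substitution `σ_F = F_H F_X / (F F_{HX})`. -/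
def sigmaF (F : ℝ → ℝ → ℝ) (H X : ℝ) : ℝ :=
  dH F H X * dX F H X / (F H X * dHX F H X)

/-- A neoclassical production function: positive on the positive quadrant, homogeneous of
degree one, concave, continuously differentiable, with positive partial derivatives. -/
structure Neoclassical (F : ℝ → ℝ → ℝ) : Prop where
  pos : ∀ ⦃H X : ℝ⦄, 0 < H → 0 < X → 0 < F H X
  homog : ∀ ⦃l H X : ℝ⦄, 0 < l → 0 < H → 0 < X → F (l * H) (l * X) = l * F H X
  concave : ConcaveOn ℝ {p : ℝ × ℝ | 0 < p.1 ∧ 0 < p.2} (fun p => F p.1 p.2)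
  contDiff : ContDiffOn ℝ 1 (fun p : ℝ × ℝ => F p.1 p.2) {p : ℝ × ℝ | 0 < p.1 ∧ 0 < p.2}
  dH_pos : ∀ ⦃H X : ℝ⦄, 0 < H → 0 < X → 0 < dH F H X
  dX_pos : ∀ ⦃H X : ℝ⦄, 0 < H → 0 < X → 0 < dX F H X

/-- `g` is a version of the conditional expectation of the nonnegative extended-real-valued
function `f` given the sub-σ-algebra `m0`: it is `m0`-measurable and has the same integral
as `f` on every `m0`-measurable set. -/
def IsCondExp {Ω : Type*} (m0 : MeasurableSpace Ω) {m : MeasurableSpace Ω}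
    (μ : Measure Ω) (f g : Ω → ENNReal) : Prop :=
  Measurable[m0] g ∧ ∀ s : Set Ω, MeasurableSet[m0] s →
    ∫⁻ ω in s, f ω ∂μ = ∫⁻ ω in s, g ω ∂μ

section A
variable {F : ℝ → ℝ → ℝ}

lemma aux_cd (hF2 : ContDiffOn ℝ 2 (fun p : ℝ × ℝ => F p.1 p.2) {p : ℝ × ℝ | 0 < p.1 ∧ 0 < p.2}) :
    ContDiffOn ℝ 2 (fun x => F x 1) (Set.Ioi 0) := by
  have : ContDiffOn ℝ 2 (fun x : ℝ => (x, (1:ℝ))) (Set.Ioi 0) := by fun_prop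
  exact hF2.comp this (fun x hx => ⟨hx, by simp⟩)

lemma aux_hd (hF2 : ContDiffOn ℝ 2 (fun p : ℝ × ℝ => F p.1 p.2) {p : ℝ × ℝ | 0 < p.1 ∧ 0 < p.2})
    {x : ℝ} (hx : 0 < x) : HasDerivAt (fun x => F x 1) (deriv (fun x => F x 1) x) x := by
  have h := (aux_cd hF2).contDiffAt (Ioi_mem_nhds hx)
  exact (h.differentiableAt (by norm_num)).hasDerivAt

lemma aux_hd2 (hF2 : ContDiffOn ℝ 2 (fun p : ℝ × ℝ => F p.1 p.2) {p : ℝ × ℝ | 0 < p.1 ∧ 0 < p.2})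
    {x : ℝ} (hx : 0 < x) : HasDerivAt (deriv (fun x => F x 1))
      (deriv (deriv (fun x => F x 1)) x) x := by
  have h : ContDiffOn ℝ 1 (deriv (fun x => F x 1)) (Set.Ioi 0) :=
    (aux_cd hF2).deriv_of_isOpen isOpen_Ioi (by norm_num)
  exact ((h.contDiffAt (Ioi_mem_nhds hx)).differentiableAt (by norm_num)).hasDerivAt

lemma aux_F (hF : Neoclassical F) {H X : ℝ} (hH : 0 < H) (hX : 0 < X) :
    F H X = X * F (H / X) 1 := by
  rw [← hF.homog hX (div_pos hH hX) one_pos]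
  congr 1 <;> field_simp

lemma aux_dH (hF : Neoclassical F)
    (hF2 : ContDiffOn ℝ 2 (fun p : ℝ × ℝ => F p.1 p.2) {p : ℝ × ℝ | 0 < p.1 ∧ 0 < p.2})
    {H X : ℝ} (hH : 0 < H) (hX : 0 < X) :
    dH F H X = deriv (fun x => F x 1) (H / X) := by
  have e : (fun h => F h X) =ᶠ[𝓝 H] (fun h => X * (fun x => F x 1) (h / X)) := by
    filter_upwards [Ioi_mem_nhds hH] with h hh using aux_F hF hh hX
  have h1 := (((aux_hd hF2 (div_pos hH hX)).comp H ((hasDerivAt_id H).div_const X)).const_mul X)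
  unfold dH
  rw [e.deriv_eq]
  refine h1.deriv.trans ?_
  field_simp

lemma aux_dX (hF : Neoclassical F)
    (hF2 : ContDiffOn ℝ 2 (fun p : ℝ × ℝ => F p.1 p.2) {p : ℝ × ℝ | 0 < p.1 ∧ 0 < p.2})
    {H X : ℝ} (hH : 0 < H) (hX : 0 < X) :
    dX F H X = F (H / X) 1 - (H / X) * deriv (fun x => F x 1) (H / X) := by
  have e : (fun x => F H x) =ᶠ[𝓝 X] (fun x => x * (fun x => F x 1) (H / x)) := by
    filter_upwards [Ioi_mem_nhds hX] with h hh using aux_F hF hH hh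
  have h0 : HasDerivAt (fun x => H / x) (-H / X ^ 2) X := by
    have := (hasDerivAt_const X H).div (hasDerivAt_id X) hX.ne'
    exact this.congr_deriv (by simp)
  have h1 := (hasDerivAt_id X).mul ((aux_hd hF2 (div_pos hH hX)).comp X h0)
  unfold dX
  rw [e.deriv_eq]
  refine h1.deriv.trans ?_
  simp only [Function.comp, id]
  field_simp
  ring

lemma aux_dHX (hF : Neoclassical F)
    (hF2 : ContDiffOn ℝ 2 (fun p : ℝ × ℝ => F p.1 p.2) {p : ℝ × ℝ | 0 < p.1 ∧ 0 < p.2})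
    {H : ℝ} (hH : 0 < H) :
    dHX F H 1 = - (H * deriv (deriv (fun x => F x 1)) H) := by
  have e : (fun x => dH F H x) =ᶠ[𝓝 1] (fun x => deriv (fun x => F x 1) (H / x)) := by
    filter_upwards [Ioi_mem_nhds one_pos] with h hh using aux_dH hF hF2 hH hh
  have h0 : HasDerivAt (fun x => H / x) (-H / 1 ^ 2) (1:ℝ) := by
    have := (hasDerivAt_const (1:ℝ) H).div (hasDerivAt_id (1:ℝ)) one_ne_zero
    exact this.congr_deriv (by simp)
  have h1 := (aux_hd2 hF2 (div_pos hH one_pos)).comp 1 h0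
  unfold dHX
  rw [e.deriv_eq]
  refine h1.deriv.trans ?_
  simp; ring

lemma aux_growth (hF : Neoclassical F)
    (hF2 : ContDiffOn ℝ 2 (fun p : ℝ × ℝ => F p.1 p.2) {p : ℝ × ℝ | 0 < p.1 ∧ 0 < p.2})
    (hFHX : ∀ ⦃H X : ℝ⦄, 0 < H → 0 < X → 0 < dHX F H X)
    (σ : ℝ) (hσ : 1 < σ)
    (hliminf : σ < atTop.liminf (fun H : ℝ => sigmaF F H 1)) :
    ∃ C x0 : ℝ, 0 < x0 ∧ ∀ H X : ℝ, 0 < H → 0 < X → x0 ≤ H / X →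
      dX F H X * X ≤ C * (H / X) ^ (1 / σ - 1) * (dH F H X * H) := by
  have hev : ∀ᶠ H in atTop, σ ≤ sigmaF F H 1 := by
    rw [Filter.liminf_eq] at hliminf
    have hne : {a | ∀ᶠ n in atTop, a ≤ sigmaF F n 1}.Nonempty := by
      by_contra hne
      rw [Set.not_nonempty_iff_eq_empty] at hne
      rw [hne, Real.sSup_empty] at hliminf
      linarith
    obtain ⟨a, ha, haσ⟩ := exists_lt_of_lt_csSup hne hliminf
    filter_upwards [ha] with H hH using haσ.le.trans hH
  obtain ⟨x1, hx1⟩ := eventually_atTop.1 hev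
  set x0 := max x1 1 with hx0
  have hx0p : 0 < x0 := lt_of_lt_of_le one_pos (le_max_right _ _)
  set f : ℝ → ℝ := fun x => F x 1 with hf
  set k : ℝ → ℝ := fun x => f x / deriv f x - x with hk
  have hf1 : ∀ x, 0 < x → 0 < deriv f x := fun x hx => by
    have := hF.dH_pos hx one_pos
    rwa [aux_dH hF hF2 hx one_pos, div_one] at this
  have hf2 : ∀ x, 0 < x → 0 < f x - x * deriv f x := fun x hx => by
    have := hF.dX_pos hx one_pos
    rwa [aux_dX hF hF2 hx one_pos, div_one] at this
  set G : ℝ → ℝ := fun x => k x * x ^ (-(1 / σ)) with hG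
  have hGd : ∀ x, 0 < x → HasDerivAt G
      ((((deriv f x * deriv f x - f x * deriv (deriv f) x) / (deriv f x) ^ 2 - 1)) * x ^ (-(1 / σ))
        + k x * (-(1 / σ) * x ^ (-(1 / σ) - 1))) x := fun x hx =>
    (((aux_hd hF2 hx).div (aux_hd2 hF2 hx) (hf1 x hx).ne').sub (hasDerivAt_id x)).mul
      (Real.hasDerivAt_rpow_const (Or.inl hx.ne'))
  have hanti : AntitoneOn G (Set.Ici x0) := by
    apply antitoneOn_of_deriv_nonpos (convex_Ici _)
    · intro x hx
      exact (hGd x (hx0p.trans_le hx)).continuousAt.continuousWithinAt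
    · intro x hx
      rw [interior_Ici] at hx
      exact (hGd x (hx0p.trans hx)).differentiableAt.differentiableWithinAt
    · intro x hx
      rw [interior_Ici] at hx
      have hxp : 0 < x := hx0p.trans hx
      rw [(hGd x hxp).deriv]
      have hs := hx1 x ((le_max_left _ _).trans (le_of_lt hx))
      have h2 := hFHX hxp one_pos
      have h0 := hF.pos hxp one_pos
      unfold sigmaF at hs
      rw [le_div_iff₀ (mul_pos h0 h2), aux_dHX hF hF2 hxp, aux_dH hF hF2 hxp one_pos,
        aux_dX hF hF2 hxp one_pos, div_one] at hs
      change σ * (f x * -(x * deriv (deriv f) x)) ≤ deriv f x * (f x - x * deriv f x) at hs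
      rw [Real.rpow_sub_one hxp.ne']
      have hd := hf1 x hxp
      have hxr : 0 < x ^ (-(1 / σ)) := Real.rpow_pos_of_pos hxp _
      have : ((deriv f x * deriv f x - f x * deriv (deriv f) x) / (deriv f x) ^ 2 - 1)
          * x ^ (-(1 / σ)) + k x * (-(1 / σ) * (x ^ (-(1 / σ)) / x))
          = x ^ (-(1 / σ)) / (σ * x * deriv f x ^ 2) *
            (σ * (f x * -(x * deriv (deriv f) x)) - deriv f x * (f x - x * deriv f x)) := by
        simp only [hk]
        generalize x ^ (-(1 / σ)) = z
        field_simp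
        ring
      rw [this]
      apply mul_nonpos_of_nonneg_of_nonpos
      · positivity
      · linarith
  refine ⟨G x0, x0, hx0p, fun H X hH hX hx => ?_⟩
  have hxp : 0 < H / X := div_pos hH hX
  have h := hanti (Set.mem_Ici.2 le_rfl) (Set.mem_Ici.2 hx) hx
  rw [aux_dX hF hF2 hH hX, aux_dH hF hF2 hH hX]
  change (f (H/X) - (H/X) * deriv f (H/X)) * X ≤ G x0 * (H/X) ^ (1 / σ - 1) * (deriv f (H/X) * H)
  obtain ⟨x, hxx⟩ : ∃ x, x = H / X := ⟨_, rfl⟩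
  have hHx : H = x * X := by rw [hxx]; field_simp
  rw [← hxx] at h hxp ⊢
  have hd := hf1 x hxp
  have e1 : G x * x ^ (1 / σ - 1) = k x / x := by
    simp only [hG]
    rw [mul_assoc, ← Real.rpow_add hxp]
    have : -(1/σ) + (1/σ - 1) = -1 := by ring
    rw [this, Real.rpow_neg_one]; rfl
  calc (f x - x * deriv f x) * X = (k x / x) * (deriv f x * H) := by
        rw [hHx]; simp only [hk]; field_simp
    _ = G x * x ^ (1 / σ - 1) * (deriv f x * H) := by rw [e1]
    _ ≤ _ := by
        have : 0 < x ^ (1 / σ - 1) := Real.rpow_pos_of_pos hxp _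
        gcongr
end A

def aux_q (y : ℕ → ℝ) (t s : ℕ) : ℝ := y (t + s + 1) / ∏ j ∈ Finset.range (s + 1), (1 + y (t + j + 1))

lemma aux_prod_ge {y : ℕ → ℝ} (hy : ∀ t, 0 < y t) (t n : ℕ) :
    1 ≤ ∏ j ∈ Finset.range n, (1 + y (t + j + 1)) := by
  induction n with
  | zero => simp
  | succ n ih =>
    rw [Finset.prod_range_succ]
    nlinarith [hy (t + n + 1)]

lemma aux_q_nonneg {y : ℕ → ℝ} (hy : ∀ t, 0 < y t) (t s : ℕ) : 0 ≤ aux_q y t s :=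
  div_nonneg (hy _).le (zero_le_one.trans (aux_prod_ge hy _ _))

lemma aux_q_sum {y : ℕ → ℝ} (hy : ∀ t, 0 < y t) (t n : ℕ) :
    ∑ s ∈ Finset.range n, aux_q y t s = 1 - 1 / ∏ j ∈ Finset.range n, (1 + y (t + j + 1)) := by
  induction n with
  | zero => simp
  | succ n ih =>
    rw [Finset.sum_range_succ, ih, aux_q, Finset.prod_range_succ]
    have h1 := aux_prod_ge hy t n
    have h2 := hy (t + n + 1)
    have h3 : ∏ j ∈ Finset.range n, (1 + y (t + j + 1)) ≠ 0 := by linarith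
    have h4 : 1 + y (t + n + 1) ≠ 0 := by linarith
    field_simp
    ring

lemma aux_T_le_one {y : ℕ → ℝ} (hy : ∀ t, 0 < y t) (t : ℕ) :
    ∑' s, ENNReal.ofReal (aux_q y t s) ≤ 1 := by
  rw [ENNReal.tsum_eq_iSup_nat]
  refine iSup_le fun n => ?_
  rw [← ENNReal.ofReal_sum_of_nonneg (fun s _ => aux_q_nonneg hy t s), aux_q_sum hy]
  refine ENNReal.ofReal_le_one.2 ?_
  have := aux_prod_ge hy t n
  have : 0 ≤ 1 / ∏ j ∈ Finset.range n, (1 + y (t + j + 1)) := by positivity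
  linarith

lemma aux_q_succ {y : ℕ → ℝ} (t s : ℕ) :
    aux_q y t (s + 1) = (1 / (1 + y (t + 1))) * aux_q y (t + 1) s := by
  unfold aux_q
  rw [Finset.prod_range_succ' _ (s + 1)]
  have : ∀ j, t + (j + 1) + 1 = t + 1 + j + 1 := fun j => by ring
  simp only [this, add_zero]
  rw [div_mul_div_comm, one_mul, mul_comm (1 + y (t + 1))]

lemma aux_T_anti {y : ℕ → ℝ} (hy : ∀ t, 0 < y t) (t : ℕ) :
    ∑' s, ENNReal.ofReal (aux_q y (t + 1) s) ≤ ∑' s, ENNReal.ofReal (aux_q y t s) := by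
  have h1 := aux_T_le_one hy (t + 1)
  have hyt := hy (t + 1)
  have hb : 0 ≤ 1 / (1 + y (t + 1)) := by positivity
  rw [tsum_eq_zero_add' (f := fun s => ENNReal.ofReal (aux_q y t s)) ENNReal.summable]
  simp only [aux_q_succ, ENNReal.ofReal_mul hb, ENNReal.tsum_mul_left]
  have h0 : aux_q y t 0 = y (t + 1) / (1 + y (t + 1)) := by simp [aux_q]
  rw [h0]
  set T := ∑' s, ENNReal.ofReal (aux_q y (t + 1) s)
  calc T = (ENNReal.ofReal (y (t + 1) / (1 + y (t + 1))) + ENNReal.ofReal (1 / (1 + y (t + 1)))) * T := by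
        rw [← ENNReal.ofReal_add (by positivity) hb]
        have : y (t + 1) / (1 + y (t + 1)) + 1 / (1 + y (t + 1)) = 1 := by field_simp; ring
        rw [this]; simp
    _ ≤ _ := by
        rw [add_mul]
        gcongr
        exact mul_le_of_le_one_right' h1

lemma aux_T_le_tail {y : ℕ → ℝ} (hy : ∀ t, 0 < y t) (t : ℕ) :
    ∑' s, ENNReal.ofReal (aux_q y t s) ≤ ∑' s, ENNReal.ofReal (y (s + t + 1)) := by
  refine ENNReal.tsum_le_tsum fun s => ENNReal.ofReal_le_ofReal ?_
  rw [add_comm s t]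
  exact div_le_self (hy _).le (aux_prod_ge hy _ _)

lemma aux_m {β : ℝ} (hβ : 0 < β) {w r : ℕ → ℝ} (hw : ∀ t, 0 < w t) (hr : ∀ t, 0 < r t) (t s : ℕ) :
    ∏ j ∈ Finset.range s, β * w (t + j) / (β * w (t + j + 1) + r (t + j + 1)) =
    w t / w (t + s) / ∏ j ∈ Finset.range s, (1 + r (t + j + 1) / (β * w (t + j + 1))) := by
  induction s with
  | zero => simp [(hw t).ne']
  | succ n ih =>
    have h3 : 1 ≤ ∏ j ∈ Finset.range n, (1 + r (t + j + 1) / (β * w (t + j + 1))) :=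
      aux_prod_ge (y := fun t => r t / (β * w t)) (fun t => div_pos (hr _) (mul_pos hβ (hw _))) t n
    rw [Finset.prod_range_succ, Finset.prod_range_succ, ih, ← add_assoc]
    generalize ∏ j ∈ Finset.range n, (1 + r (t + j + 1) / (β * w (t + j + 1))) = p at *
    have h1 := hw (t + n)
    have h2 := hw (t + n + 1)
    have h4 := hr (t + n + 1)
    have h5 : 0 < p := by linarith
    have h6 : 1 + r (t + n + 1) / (β * w (t + n + 1)) =
      (β * w (t + n + 1) + r (t + n + 1)) / (β * w (t + n + 1)) := by field_simp
    rw [h6]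
    field_simp

lemma aux_mq {β : ℝ} (hβ : 0 < β) {w r : ℕ → ℝ} (hw : ∀ t, 0 < w t) (hr : ∀ t, 0 < r t) (t s : ℕ) :
    (∏ j ∈ Finset.range (s + 1), β * w (t + j) / (β * w (t + j + 1) + r (t + j + 1)))
      * r (t + s + 1) = aux_q (fun t => r t / (β * w t)) t s * (β * w t) := by
  rw [aux_m hβ hw hr, aux_q, ← add_assoc]
  have h3 : 1 ≤ ∏ j ∈ Finset.range (s + 1), (1 + r (t + j + 1) / (β * w (t + j + 1))) :=
      aux_prod_ge (y := fun t => r t / (β * w t)) (fun t => div_pos (hr _) (mul_pos hβ (hw _))) t _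
  generalize ∏ j ∈ Finset.range (s + 1), (1 + r (t + j + 1) / (β * w (t + j + 1))) = p at *
  have h2 := hw (t + s + 1)
  have h5 : 0 < p := by linarith
  field_simp

lemma aux_condexp_mul {Ω : Type*} {m0 : MeasurableSpace Ω} {m : MeasurableSpace Ω} (hm : m0 ≤ m)
    {μ : Measure Ω} {f g h : Ω → ENNReal} (hf : Measurable f) (hc : IsCondExp m0 μ f g)
    (hh : Measurable[m0] h) : ∫⁻ ω, f ω * h ω ∂μ = ∫⁻ ω, g ω * h ω ∂μ := by
  have hg : Measurable g := hc.1.mono hm le_rfl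
  have e : (μ.withDensity f).trim hm = (μ.withDensity g).trim hm := by
    refine @Measure.ext _ m0 _ _ fun s hs => ?_
    rw [trim_measurableSet_eq hm hs, trim_measurableSet_eq hm hs, withDensity_apply _ (hm s hs),
      withDensity_apply _ (hm s hs), hc.2 s hs]
  have h1 := lintegral_withDensity_eq_lintegral_mul μ hf (hh.mono hm le_rfl)
  have h2 := lintegral_withDensity_eq_lintegral_mul μ hg (hh.mono hm le_rfl)
  rw [← lintegral_trim hm hh] at h1 h2
  rw [e] at h1
  exact h1.symm.trans h2

lemma aux_condexp_finite {Ω : Type*} {m0 : MeasurableSpace Ω} {m : MeasurableSpace Ω} (hm : m0 ≤ m)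
    {μ : Measure Ω} [IsProbabilityMeasure μ] {f g : Ω → ENNReal} (hf : Measurable f)
    (hc : IsCondExp m0 μ f g) (hg : ∀ᵐ ω ∂μ, g ω < ⊤) : ∀ᵐ ω ∂μ, f ω < ⊤ := by
  have key : ∀ n : ℕ, ∀ᵐ ω ∂μ, g ω ≤ n → f ω < ⊤ := by
    intro n
    have hs : MeasurableSet[m0] {ω | g ω ≤ n} := hc.1 measurableSet_Iic
    have h1 : ∫⁻ ω in {ω | g ω ≤ n}, f ω ∂μ ≠ ⊤ := by
      rw [hc.2 _ hs]
      refine ne_of_lt (lt_of_le_of_lt (setLIntegral_mono' (g := fun _ => (n : ENNReal)) (hm _ hs)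
        (fun ω hω => hω)) ?_)
      rw [setLIntegral_const]
      exact ENNReal.mul_lt_top (by simp) (measure_lt_top _ _)
    exact (ae_restrict_iff' (hm _ hs)).1 (ae_lt_top hf h1)
  filter_upwards [ae_all_iff.2 key, hg] with ω h1 h2
  obtain ⟨n, hn⟩ := ENNReal.exists_nat_gt h2.ne
  exact h1 n hn.le

lemma aux_super {Ω : Type*} {mΩ : MeasurableSpace Ω} {μ : Measure Ω} [IsProbabilityMeasure μ]
    (ℱ : Filtration ℕ mΩ) {T W : ℕ → Ω → ENNReal} (hT : ∀ t, Measurable (T t))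
    (hc : ∀ t, IsCondExp (ℱ t) μ (T t) (W t)) (hT1 : ∀ t ω, T t ω ≤ 1)
    (hTa : ∀ t ω, T (t + 1) ω ≤ T t ω)
    (hT0 : ∀ᵐ ω ∂μ, Tendsto (fun t => T t ω) atTop (𝓝 0)) :
    ∀ᵐ ω ∂μ, Tendsto (fun t => W t ω) atTop (𝓝 0) := by
  have hWm : ∀ t, Measurable (W t) := fun t => (hc t).1.mono (ℱ.le t) le_rfl
  have hint : ∀ t, ∫⁻ ω, T t ω ∂μ = ∫⁻ ω, W t ω ∂μ := fun t => by
    simpa using (hc t).2 Set.univ MeasurableSet.univ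
  have hW1 : ∀ t, ∫⁻ ω, W t ω ∂μ ≤ 1 := fun t => by
    rw [← hint]
    calc _ ≤ ∫⁻ _, 1 ∂μ := lintegral_mono (hT1 t)
      _ = 1 := by simp
  have hWne : ∀ t, ∫⁻ ω, W t ω ∂μ ≠ ⊤ := fun t => ne_top_of_le_ne_top ENNReal.one_ne_top (hW1 t)
  have hWf : ∀ t, ∀ᵐ ω ∂μ, W t ω < ⊤ := fun t => ae_lt_top (hWm t) (hWne t)
  have hsub : Submartingale (fun t ω => -(W t ω).toReal) ℱ μ := by
    refine submartingale_of_setIntegral_le_succ ?_ ?_ ?_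
    · intro t
      exact ((hc t).1.ennreal_toReal.neg).stronglyMeasurable
    · intro t
      exact (integrable_toReal_of_lintegral_ne_top (hWm t).aemeasurable (hWne t)).neg
    · intro t s hs
      rw [integral_neg, integral_neg, neg_le_neg_iff,
        integral_toReal (hWm _).aemeasurable (ae_restrict_of_ae (hWf _)),
        integral_toReal (hWm _).aemeasurable (ae_restrict_of_ae (hWf _)),
        ← (hc t).2 s hs, ← (hc (t + 1)).2 s (ℱ.mono (Nat.le_succ t) s hs)]
      refine ENNReal.toReal_mono ?_ (lintegral_mono (hTa t))
      refine ne_top_of_le_ne_top (hWne t) ?_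
      rw [← hint]
      exact setLIntegral_le_lintegral _ _
  have hex := hsub.exists_ae_tendsto_of_bdd (R := 1) (fun t => by
    rw [eLpNorm_one_eq_lintegral_enorm]
    refine le_trans (lintegral_mono fun ω => ?_) (hW1 t)
    rw [enorm_neg, Real.enorm_of_nonneg ENNReal.toReal_nonneg]
    exact ENNReal.ofReal_toReal_le)
  have hlim : Tendsto (fun t => ∫⁻ ω, T t ω ∂μ) atTop (𝓝 0) := by
    have := tendsto_lintegral_of_dominated_convergence (μ := μ) (f := fun _ => 0) (fun _ => 1) hT
      (fun t => Eventually.of_forall (hT1 t)) (by simp) hT0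
    simpa using this
  have hfat : ∫⁻ ω, liminf (fun t => W t ω) atTop ∂μ = 0 := by
    refine le_antisymm ((lintegral_liminf_le hWm).trans ?_) zero_le
    simp only [← hint]
    exact hlim.liminf_eq.le
  rw [lintegral_eq_zero_iff (Measurable.liminf hWm)] at hfat
  filter_upwards [hfat, hex, ae_all_iff.2 hWf] with ω h1 ⟨c, h2⟩ h3
  have h4 : Tendsto (fun t => W t ω) atTop (𝓝 (ENNReal.ofReal (-c))) := by
    have := ENNReal.tendsto_ofReal h2.neg
    simpa [ENNReal.ofReal_toReal (h3 _).ne] using this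
  have h5 := h4.liminf_eq
  simp only [Pi.zero_apply] at h1
  rw [h1] at h5
  rwa [← h5] at h4

/-- Under unbalanced growth (the summability condition) and elasticity of substitution
exceeding `σ > 1` at high input levels, the ratio of the fundamental value of land
`V_t = E[∑_{s≥1} m_{t→t+s} r_{t+s} | F_t]` to the equilibrium land price `P_t = β w_t`
converges to zero almost surely. -/
theorem fundamental_value_price_ratio_tendsto_zero
    {Ω : Type*} {mΩ : MeasurableSpace Ω} (μ : Measure Ω) [IsProbabilityMeasure μ]
    (ℱ : Filtration ℕ mΩ)
    (β : ℝ) (hβ : β ∈ Set.Ioo (0 : ℝ) 1)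
    (F : ℝ → ℝ → ℝ) (hF : Neoclassical F)
    (hF2 : ContDiffOn ℝ 2 (fun p : ℝ × ℝ => F p.1 p.2) {p : ℝ × ℝ | 0 < p.1 ∧ 0 < p.2})
    (hFHX : ∀ ⦃H X : ℝ⦄, 0 < H → 0 < X → 0 < dHX F H X)
    (σ : ℝ) (hσ : 1 < σ)
    (hliminf : σ < atTop.liminf (fun H : ℝ => sigmaF F H 1))
    (AH AX : ℕ → Ω → ℝ)
    (hAH_adapted : Adapted ℱ AH) (hAX_adapted : Adapted ℱ AX)
    (hAH_pos : ∀ t ω, 0 < AH t ω) (hAX_pos : ∀ t ω, 0 < AX t ω)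
    (hsum : ∃ g : Ω → ENNReal,
      IsCondExp (ℱ 0) μ
        (fun ω => ∑' t : ℕ, ENNReal.ofReal ((AH (t + 1) ω / AX (t + 1) ω) ^ (1 / σ - 1))) g ∧
      ∀ᵐ ω ∂μ, g ω < ⊤)
    (w r P : ℕ → Ω → ℝ) (m : ℕ → ℕ → Ω → ℝ)
    (hw : ∀ t ω, w t ω = dH F (AH t ω) (AX t ω) * AH t ω)
    (hr : ∀ t ω, r t ω = dX F (AH t ω) (AX t ω) * AX t ω)
    (hP : ∀ t ω, P t ω = β * w t ω)
    (hm : ∀ t s ω, m t s ω =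
      ∏ j ∈ Finset.range s, β * w (t + j) ω / (β * w (t + j + 1) ω + r (t + j + 1) ω)) :
    ∀ V : ℕ → Ω → ENNReal,
      (∀ t, IsCondExp (ℱ t) μ
        (fun ω => ∑' s : ℕ, ENNReal.ofReal (m t (s + 1) ω * r (t + s + 1) ω)) (V t)) →
      ∀ᵐ ω ∂μ, Tendsto (fun t => V t ω / ENNReal.ofReal (P t ω)) atTop (𝓝 0) := by
  intro V hV
  obtain ⟨g, hg, hgf⟩ := hsum
  have hβ0 : 0 < β := hβ.1
  have hxpos : ∀ t ω, 0 < AH t ω / AX t ω := fun t ω => div_pos (hAH_pos t ω) (hAX_pos t ω)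
  have hwpos : ∀ t ω, 0 < w t ω := fun t ω => by
    rw [hw]; exact mul_pos (hF.dH_pos (hAH_pos t ω) (hAX_pos t ω)) (hAH_pos t ω)
  have hrpos : ∀ t ω, 0 < r t ω := fun t ω => by
    rw [hr]; exact mul_pos (hF.dX_pos (hAH_pos t ω) (hAX_pos t ω)) (hAX_pos t ω)
  have hPpos : ∀ t ω, 0 < P t ω := fun t ω => by
    rw [hP]; exact mul_pos hβ0 (hwpos t ω)
  have hAHm : ∀ t, Measurable[ℱ t] (AH t) := fun t => hAH_adapted t
  have hAXm : ∀ t, Measurable[ℱ t] (AX t) := fun t => hAX_adapted t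
  have hfm : ∃ f' : ℝ → ℝ, Measurable f' ∧ ∀ x, 0 < x → f' x = F x 1 := by
    refine ⟨fun x => F (Real.exp (Real.log x)) 1, ?_, fun x hx => by simp only [Real.exp_log hx]⟩
    have : Continuous (fun z => F (Real.exp z) 1) :=
      (aux_cd hF2).continuousOn.comp_continuous Real.continuous_exp (fun z => Real.exp_pos z)
    exact this.measurable.comp Real.measurable_log
  obtain ⟨f', hf'm, hf'⟩ := hfm
  have hxm : ∀ t, Measurable[ℱ t] (fun ω => AH t ω / AX t ω) := fun t => (hAHm t).div (hAXm t)
  have hwm : ∀ t, Measurable[ℱ t] (w t) := fun t => by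
    have e : w t = fun ω => deriv (fun x => F x 1) (AH t ω / AX t ω) * AH t ω := by
      funext ω; rw [hw, aux_dH hF hF2 (hAH_pos t ω) (hAX_pos t ω)]
    rw [e]
    exact ((measurable_deriv _).comp (hxm t)).mul (hAHm t)
  have hrm : ∀ t, Measurable[ℱ t] (r t) := fun t => by
    have e : r t = fun ω => (f' (AH t ω / AX t ω) - (AH t ω / AX t ω) *
        deriv (fun x => F x 1) (AH t ω / AX t ω)) * AX t ω := by
      funext ω
      rw [hr, aux_dX hF hF2 (hAH_pos t ω) (hAX_pos t ω), hf' _ (hxpos t ω)]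
    rw [e]
    exact ((hf'm.comp (hxm t)).sub ((hxm t).mul ((measurable_deriv _).comp (hxm t)))).mul (hAXm t)
  have hwM : ∀ t, Measurable (w t) := fun t => (hwm t).mono (ℱ.le t) le_rfl
  have hrM : ∀ t, Measurable (r t) := fun t => (hrm t).mono (ℱ.le t) le_rfl
  have hPm : ∀ t, Measurable[ℱ t] (P t) := fun t => by
    have e : P t = fun ω => β * w t ω := funext (hP t)
    rw [e]; exact (hwm t).const_mul β
  set y : Ω → ℕ → ℝ := fun ω t => r t ω / (β * w t ω) with hy
  have hypos : ∀ ω t, 0 < y ω t := fun ω t => div_pos (hrpos t ω) (mul_pos hβ0 (hwpos t ω))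
  set T : ℕ → Ω → ENNReal := fun t ω => ∑' s, ENNReal.ofReal (aux_q (y ω) t s) with hTdef
  have hyM : ∀ t, Measurable (fun ω => y ω t) := fun t => (hrM t).div ((hwM t).const_mul β)
  have hTm : ∀ t, Measurable (T t) := fun t => by
    refine Measurable.ennreal_tsum fun s => ENNReal.measurable_ofReal.comp ?_
    unfold aux_q
    exact (hyM _).div (Finset.measurable_fun_prod _ fun j _ => (hyM _).const_add 1)
  have hfT : ∀ t, (fun ω => ∑' s : ℕ, ENNReal.ofReal (m t (s + 1) ω * r (t + s + 1) ω))
      = fun ω => T t ω * ENNReal.ofReal (P t ω) := fun t => by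
    funext ω
    simp only [hTdef]
    rw [← ENNReal.tsum_mul_right]
    refine tsum_congr fun s => ?_
    rw [← ENNReal.ofReal_mul (aux_q_nonneg (hypos ω) t s), hm, hP]
    congr 1
    exact aux_mq hβ0 (w := fun t => w t ω) (r := fun t => r t ω) (fun t => hwpos t ω)
      (fun t => hrpos t ω) t s
  have hPM : ∀ t, Measurable (fun ω => ENNReal.ofReal (P t ω)) := fun t =>
    ENNReal.measurable_ofReal.comp ((hPm t).mono (ℱ.le t) le_rfl)
  refine aux_super ℱ (T := T) hTm ?_ (fun t ω => aux_T_le_one (hypos ω) t)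
    (fun t ω => aux_T_anti (hypos ω) t) ?_
  · intro t
    have hVt := hV t
    rw [hfT t] at hVt
    have hPe : Measurable[ℱ t] (fun ω => ENNReal.ofReal (P t ω)) :=
      ENNReal.measurable_ofReal.comp (hPm t)
    refine ⟨hVt.1.div hPe, fun s hs => ?_⟩
    have h1 := aux_condexp_mul (ℱ.le t) ((hTm t).mul (hPM t)) hVt
      (h := s.indicator fun ω => (ENNReal.ofReal (P t ω))⁻¹) (hPe.inv.indicator hs)
    rw [← lintegral_indicator (ℱ.le t s hs), ← lintegral_indicator (ℱ.le t s hs)]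
    refine Eq.trans (lintegral_congr fun ω => ?_) (h1.trans (lintegral_congr fun ω => ?_))
    · by_cases hω : ω ∈ s
      · simp only [Set.indicator_of_mem hω, Pi.mul_apply]
        rw [mul_assoc, ENNReal.mul_inv_cancel (ENNReal.ofReal_pos.2 (hPpos t ω)).ne'
          ENNReal.ofReal_ne_top, mul_one]
      · simp [hω]
    · by_cases hω : ω ∈ s
      · simp only [Set.indicator_of_mem hω]; rfl
      · simp [hω]
  · obtain ⟨C, x0, hx0, hC⟩ := aux_growth hF hF2 hFHX σ hσ hliminf
    have hsm : Measurable (fun ω => ∑' t : ℕ,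
        ENNReal.ofReal ((AH (t + 1) ω / AX (t + 1) ω) ^ (1 / σ - 1))) :=
      Measurable.ennreal_tsum fun t => ENNReal.measurable_ofReal.comp
        (((hxm (t + 1)).mono (ℱ.le _) le_rfl).pow_const _)
    filter_upwards [aux_condexp_finite (ℱ.le 0) hsm hg hgf] with ω hω
    have he : 1 / σ - 1 < 0 := by
      have : 1 / σ < 1 := by rw [div_lt_one (by linarith)]; exact hσ
      linarith
    have hz0 : ∀ t, 0 < (AH t ω / AX t ω) ^ (1 / σ - 1) := fun t =>
      Real.rpow_pos_of_pos (hxpos t ω) _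
    have hsmm : Summable fun t : ℕ => (AH (t + 1) ω / AX (t + 1) ω) ^ (1 / σ - 1) := by
      have := ENNReal.summable_toReal hω.ne
      exact this.congr fun t => ENNReal.toReal_ofReal (hz0 _).le
    have hev : ∀ᶠ t : ℕ in atTop, x0 ≤ AH (t + 1) ω / AX (t + 1) ω := by
      have h0 : 0 < x0 ^ (1 / σ - 1) := Real.rpow_pos_of_pos hx0 _
      filter_upwards [hsmm.tendsto_atTop_zero.eventually (gt_mem_nhds h0)] with t ht
      by_contra hlt
      push Not at hlt
      exact absurd (Real.rpow_lt_rpow_of_neg (hxpos _ ω) hlt he) (not_lt.2 ht.le)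
    have hys : Summable fun t : ℕ => y ω (t + 1) := by
      refine Summable.of_norm_bounded_eventually_nat (hsmm.mul_left (C / β)) ?_
      filter_upwards [hev] with t ht
      rw [Real.norm_of_nonneg (hypos ω _).le]
      have h := hC _ _ (hAH_pos (t + 1) ω) (hAX_pos (t + 1) ω) ht
      rw [← hr, ← hw] at h
      simp only [hy]
      have hwp := hwpos (t + 1) ω
      rw [div_le_iff₀ (mul_pos hβ0 hwp)]
      refine h.trans (le_of_eq ?_)
      generalize (AH (t + 1) ω / AX (t + 1) ω) ^ (1 / σ - 1) = z
      field_simp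
    have htop : ∑' t, ENNReal.ofReal (y ω (t + 1)) ≠ ⊤ := hys.tsum_ofReal_ne_top
    have htail := ENNReal.tendsto_sum_nat_add _ htop
    exact tendsto_of_tendsto_of_tendsto_of_le_of_le tendsto_const_nhds htail
      (fun t => zero_le) (fun t => aux_T_le_tail (hypos ω) t)
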